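/- arXiv:1508.04836 — 2 statements merged into one kernel-verified Lean document; each statement's English description precedes it below -/
import Mathlib

section
/- There exists an absolute constant C such that for every finite irreducible reversible Markov chain (Ω,P,π), every probability measure μ on Ω, every real t ≥ 2 and every s with 2 ≤ s ≤ e^t: d_ave(t + ⌈s√t⌉, μ) ≤ d_L(2t, μ) + C · s^{−1} √(log s). -/
open Matrix Filter Asymptotics

/-- `P` is a stochastic matrix. -/
def IsStochastic {Ω : Type*} [Fintype Ω] (P : Matrix Ω Ω ℝ) : Prop :=
  (∀ x y, 0 ≤ P x y) ∧ ∀ x, ∑ y, P x y = 1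

/-- `P` is irreducible. -/
def IsIrreducibleMatrix {Ω : Type*} [Fintype Ω] [DecidableEq Ω] (P : Matrix Ω Ω ℝ) : Prop :=
  ∀ x y, ∃ n : ℕ, 0 < (P ^ n) x y

/-- `μ` is a probability vector. -/
def IsProbVec {Ω : Type*} [Fintype Ω] (μ : Ω → ℝ) : Prop :=
  (∀ x, 0 ≤ μ x) ∧ ∑ x, μ x = 1

/-- The chain `(P, pi)` is reversible. -/
def IsReversible {Ω : Type*} [Fintype Ω] (P : Matrix Ω Ω ℝ) (pi : Ω → ℝ) : Prop :=
  ∀ x y, pi x * P x y = pi y * P y x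

/-- A finite irreducible Markov chain `P` with stationary distribution `pi`. -/
def IsMC {Ω : Type*} [Fintype Ω] [DecidableEq Ω] (P : Matrix Ω Ω ℝ) (pi : Ω → ℝ) : Prop :=
  IsStochastic P ∧ IsIrreducibleMatrix P ∧ IsProbVec pi ∧ pi ᵥ* P = pi

/-- A finite irreducible reversible Markov chain `P` with stationary distribution `pi`. -/
def IsRevMC {Ω : Type*} [Fintype Ω] [DecidableEq Ω] (P : Matrix Ω Ω ℝ) (pi : Ω → ℝ) : Prop :=
  IsMC P pi ∧ IsReversible P pi

/-- Total-variation distance between two measures on a finite set. -/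
noncomputable def tvDist {Ω : Type*} [Fintype Ω] (μ ν : Ω → ℝ) : ℝ :=
  (∑ x, |μ x - ν x|) / 2

/-- The lazy version `(I + P)/2` of `P`. -/
noncomputable def lazyM {Ω : Type*} [Fintype Ω] [DecidableEq Ω] (P : Matrix Ω Ω ℝ) :
    Matrix Ω Ω ℝ :=
  (2 : ℝ)⁻¹ • (1 + P)

/-- `d_c(t, μ)`: TV distance from stationarity of the continuous-time chain at time `t`,
started from `μ`. -/
noncomputable def contDist {Ω : Type*} [Fintype Ω] [DecidableEq Ω] (P : Matrix Ω Ω ℝ) (pi : Ω → ℝ)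
    (t : ℝ) (μ : Ω → ℝ) : ℝ :=
  tvDist (fun y => ∑' k : ℕ, Real.exp (-t) * t ^ k / (Nat.factorial k) * (μ ᵥ* (P ^ k)) y) pi

/-- `d_L(t, μ)`: TV distance from stationarity of the lazy chain at (discrete) time `t`,
started from `μ`. -/
noncomputable def lazyDist {Ω : Type*} [Fintype Ω] [DecidableEq Ω] (P : Matrix Ω Ω ℝ)
    (pi : Ω → ℝ) (t : ℝ) (μ : Ω → ℝ) : ℝ :=
  tvDist (μ ᵥ* (lazyM P ^ ⌊t⌋₊)) pi

/-- `d_ave(t, μ)`: TV distance from stationarity of the averaged chain at (discrete) time `t`,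
started from `μ`. -/
noncomputable def aveDist {Ω : Type*} [Fintype Ω] [DecidableEq Ω] (P : Matrix Ω Ω ℝ) (pi : Ω → ℝ)
    (t : ℝ) (μ : Ω → ℝ) : ℝ :=
  tvDist (fun y => ((μ ᵥ* (P ^ ⌊t⌋₊)) y + (μ ᵥ* (P ^ (⌊t⌋₊ + 1))) y) / 2) pi

/-- The point mass at `x`. -/
noncomputable def deltaMass {Ω : Type*} [DecidableEq Ω] (x : Ω) : Ω → ℝ :=
  fun y => if y = x then 1 else 0

/-- Worst-case continuous-time distance `d_c(t)`. -/
noncomputable def contDistMax {Ω : Type*} [Fintype Ω] [DecidableEq Ω] (P : Matrix Ω Ω ℝ)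
    (pi : Ω → ℝ) (t : ℝ) : ℝ :=
  ⨆ x : Ω, contDist P pi t (deltaMass x)

/-- Worst-case lazy distance `d_L(t)`. -/
noncomputable def lazyDistMax {Ω : Type*} [Fintype Ω] [DecidableEq Ω] (P : Matrix Ω Ω ℝ)
    (pi : Ω → ℝ) (t : ℝ) : ℝ :=
  ⨆ x : Ω, lazyDist P pi t (deltaMass x)

/-- Worst-case averaged distance `d_ave(t)`. -/
noncomputable def aveDistMax {Ω : Type*} [Fintype Ω] [DecidableEq Ω] (P : Matrix Ω Ω ℝ)
    (pi : Ω → ℝ) (t : ℝ) : ℝ :=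
  ⨆ x : Ω, aveDist P pi t (deltaMass x)

/-- `φ_{α,C}(t) = t + ⌈C t^{(1+2α)/2} √(α log t)⌉`. -/
noncomputable def phiAC (α C t : ℝ) : ℝ :=
  t + ((⌈C * t ^ ((1 + 2 * α) / 2) * Real.sqrt (α * Real.log t)⌉ : ℤ) : ℝ)

/-- `ψ_{α,C}(x) = min (1, x + C |log(2x)|^{-α})`. -/
noncomputable def psiAC (α C x : ℝ) : ℝ :=
  min 1 (x + C * |Real.log (2 * x)| ^ (-α))

/-- `t_c(ε)`, the `ε`-mixing time of the continuous-time chain. -/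
noncomputable def contMix {Ω : Type*} [Fintype Ω] [DecidableEq Ω] (P : Matrix Ω Ω ℝ)
    (pi : Ω → ℝ) (ε : ℝ) : ℝ :=
  sInf {t : ℝ | 0 ≤ t ∧ contDistMax P pi t ≤ ε}

/-- `t_L(ε)`, the `ε`-mixing time of the lazy chain. -/
noncomputable def lazyMix {Ω : Type*} [Fintype Ω] [DecidableEq Ω] (P : Matrix Ω Ω ℝ)
    (pi : Ω → ℝ) (ε : ℝ) : ℕ :=
  sInf {t : ℕ | lazyDistMax P pi t ≤ ε}

/-- `t_ave(ε)`, the `ε`-mixing time of the averaged chain. -/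
noncomputable def aveMix {Ω : Type*} [Fintype Ω] [DecidableEq Ω] (P : Matrix Ω Ω ℝ)
    (pi : Ω → ℝ) (ε : ℝ) : ℕ :=
  sInf {t : ℕ | aveDistMax P pi t ≤ ε}

/-! The averaged chain at time `n` has transition matrix `A n = P ^ n (I + P)/2`, which equals
`P ^ K A (n - K)` for every `K ≤ n`, and the lazy chain at time `m` runs `P` for a binomial number
`K` of steps. For a test function `f` with values in `[0, 1]`, let `g` be a pointwise majorant of
`A k f` over a window `k₀ ≤ k ≤ k₁`. Then `μ (A n) f ≤ μ P ^ K g` whenever `n - K` is in the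
window, so averaging over `K` bounds `μ (A n) f` by the lazy expectation of `g` plus the binomial
tail outside the window.

It remains to see that `π g` is close to `π f`. By reversibility, in `L²(π)` the quantity
`‖P ^ (k + 2) f - P ^ k f‖²` is the second difference at `k` of `ψ k = ‖P ^ k f‖²`. Both `ψ` and
its second difference are nonincreasing, since `P` is a contraction, which forces the second
difference to be at most `2 ψ 0 / ((k + 1) (k + 2))`. Hence the increments `A (k + 1) f - A k f`
have `L¹(π)` norm at most `1 / (k + 1)`, and `π g - π f` is at most the length of the window
divided by `k₀ + 1`. A window of length of order `√(t log s)` around `s √t` gives the theorem. -/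

section RealInequalities

lemma secondDiff_mul_le {ψ : ℕ → ℝ} (hnonneg : ∀ k, 0 ≤ ψ k) (hanti : Antitone ψ)
    (hdiff : Antitone fun k => ψ k - 2 * ψ (k + 1) + ψ (k + 2)) (k : ℕ) :
    (ψ k - 2 * ψ (k + 1) + ψ (k + 2)) * ((k + 1) * (k + 2) / 2) ≤ ψ 0 := by
  -- The right-hand side is `∑ j ≤ k, (j + 1) (ψ j - 2 ψ (j + 1) + ψ (j + 2))`.
  have habel : (ψ k - 2 * ψ (k + 1) + ψ (k + 2)) * ((k + 1) * (k + 2) / 2) ≤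
      ψ 0 - ψ (k + 1) - (k + 1) * (ψ (k + 1) - ψ (k + 2)) := by
    induction k with
    | zero => norm_num; linarith
    | succ k ih =>
      have hstep := mul_le_mul_of_nonneg_right (hdiff k.le_succ)
        (show (0 : ℝ) ≤ (k + 1) * (k + 2) / 2 by positivity)
      simp only [Nat.succ_eq_add_one, add_assoc, Nat.reduceAdd] at hstep ⊢
      push_cast
      linarith
  have hdecr : 0 ≤ ((k : ℝ) + 1) * (ψ (k + 1) - ψ (k + 2)) :=
    mul_nonneg (by positivity) (sub_nonneg.2 (hanti (Nat.le_succ _)))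
  linarith [hnonneg (k + 1)]

lemma le_add_sum_abs_sub {G : Type*} [AddCommGroup G] [Lattice G] [IsOrderedAddMonoid G]
    (F : ℕ → G) {k₀ k₁ k : ℕ} (hk₀ : k₀ ≤ k) (hk₁ : k ≤ k₁) :
    F k ≤ F k₀ + ∑ j ∈ Finset.Ico k₀ k₁, |F (j + 1) - F j| :=
  calc F k = F k₀ + ∑ j ∈ Finset.Ico k₀ k, (F (j + 1) - F j) := by
        rw [Finset.sum_Ico_sub F hk₀, add_sub_cancel]
    _ ≤ F k₀ + ∑ j ∈ Finset.Ico k₀ k, |F (j + 1) - F j| := by gcongr; exact le_abs_self _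
    _ ≤ F k₀ + ∑ j ∈ Finset.Ico k₀ k₁, |F (j + 1) - F j| := by gcongr

lemma le_sum_mul_add_sum_filter_not {ι : Type*} {s : Finset ι} {w a : ι → ℝ} {c : ℝ}
    (p : ι → Prop) [DecidablePred p] (hw0 : ∀ i ∈ s, 0 ≤ w i) (hw1 : ∑ i ∈ s, w i = 1)
    (hc : c ≤ 1) (ha : ∀ i ∈ s, 0 ≤ a i) (hca : ∀ i ∈ s, p i → c ≤ a i) :
    c ≤ ∑ i ∈ s, w i * a i + ∑ i ∈ s with ¬ p i, w i := by
  rw [← one_mul c, ← hw1, Finset.sum_mul, Finset.sum_filter, ← Finset.sum_add_distrib]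
  refine Finset.sum_le_sum fun i hi => ?_
  split_ifs with hp
  · simpa using mul_le_mul_of_nonneg_left (hca i hi hp) (hw0 i hi)
  · linarith [mul_le_mul_of_nonneg_left hc (hw0 i hi), mul_nonneg (hw0 i hi) (ha i hi)]

lemma ceil_add_le_and_le_floor_add {n K : ℕ} {x b : ℝ} (hn : 0 ≤ n - x - b)
    (hK : |K - x| ≤ b) : ⌈n - x - b⌉₊ + K ≤ n ∧ n ≤ ⌊n - x + b⌋₊ + K := by
  obtain ⟨hlower, hupper⟩ := abs_le.1 hK
  have hKn : K ≤ n := by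
    have : (K : ℝ) ≤ n := by linarith
    exact_mod_cast this
  rw [← Nat.le_sub_iff_add_le hKn, ← Nat.sub_le_iff_le_add]
  constructor
  · refine Nat.ceil_le.2 ?_
    rw [Nat.cast_sub hKn]
    linarith
  · refine Nat.le_floor ?_
    rw [Nat.cast_sub hKn]
    linarith

end RealInequalities

section BinomialTail

lemma sum_choose_div_two_pow (m : ℕ) :
    ∑ K ∈ Finset.range (m + 1), (m.choose K : ℝ) / 2 ^ m = 1 := by
  rw [← Finset.sum_div, ← Nat.cast_sum, Nat.sum_range_choose]
  simp

lemma sum_choose_mul_exp (m : ℕ) (l : ℝ) :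
    ∑ K ∈ Finset.range (m + 1), (m.choose K : ℝ) / 2 ^ m * Real.exp (l * (K - m / 2)) =
      Real.cosh (l / 2) ^ m := by
  rw [Real.cosh_eq, div_pow, add_pow, Finset.sum_div]
  refine Finset.sum_congr rfl fun K hK => ?_
  have hKm : K ≤ m := Finset.mem_range_succ_iff.1 hK
  have hexp : l * (K - m / 2) = K * (l / 2) + (m - K) * -(l / 2) := by ring
  rw [← Real.exp_nat_mul, ← Real.exp_nat_mul, ← Real.exp_add, Nat.cast_sub hKm, hexp]
  ring

lemma sum_choose_tail_le_exp (m : ℕ) {l : ℝ} (hl : 0 ≤ l) (b : ℝ) :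
    ∑ K ∈ Finset.range (m + 1) with b < |((K : ℕ) : ℝ) - m / 2|, (m.choose K : ℝ) / 2 ^ m ≤
      2 * Real.exp (m * l ^ 2 / 8 - l * b) := by
  have hmarkov (x : ℝ) (hx : b < |x|) :
      1 ≤ Real.exp (-(l * b)) * (Real.exp (l * x) + Real.exp (-l * x)) :=
    calc 1 ≤ Real.exp (-(l * b) + |l * x|) := by
          rw [abs_mul, abs_of_nonneg hl]
          exact Real.one_le_exp (by linarith [mul_le_mul_of_nonneg_left hx.le hl])
      _ = Real.exp (-(l * b)) * Real.exp |l * x| := Real.exp_add _ _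
      _ ≤ _ := by
          rw [neg_mul]
          gcongr
          exact Real.exp_abs_le _
  have hcosh : Real.cosh (l / 2) ^ m ≤ Real.exp (m * l ^ 2 / 8) :=
    calc Real.cosh (l / 2) ^ m ≤ Real.exp ((l / 2) ^ 2 / 2) ^ m :=
          pow_le_pow_left₀ (Real.cosh_pos _).le (Real.cosh_le_exp_half_sq _) m
      _ = Real.exp (m * l ^ 2 / 8) := by rw [← Real.exp_nat_mul]; ring_nf
  calc ∑ K ∈ Finset.range (m + 1) with b < |((K : ℕ) : ℝ) - m / 2|, (m.choose K : ℝ) / 2 ^ m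
      ≤ ∑ K ∈ Finset.range (m + 1), (m.choose K : ℝ) / 2 ^ m * (Real.exp (-(l * b)) *
          (Real.exp (l * (K - m / 2)) + Real.exp (-l * (K - m / 2)))) := by
        rw [Finset.sum_filter]
        refine Finset.sum_le_sum fun K _ => ?_
        split_ifs with hK
        · exact le_mul_of_one_le_right (by positivity) (hmarkov _ hK)
        · positivity
    _ = Real.exp (-(l * b)) * (Real.cosh (l / 2) ^ m + Real.cosh (-l / 2) ^ m) := by
        rw [← sum_choose_mul_exp, ← sum_choose_mul_exp, ← Finset.sum_add_distrib, Finset.mul_sum]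
        exact Finset.sum_congr rfl fun K _ => by ring
    _ = 2 * Real.cosh (l / 2) ^ m * Real.exp (-(l * b)) := by rw [neg_div, Real.cosh_neg]; ring
    _ ≤ 2 * Real.exp (m * l ^ 2 / 8) * Real.exp (-(l * b)) := by gcongr
    _ = 2 * Real.exp (m * l ^ 2 / 8 - l * b) := by rw [mul_assoc, ← Real.exp_add, sub_eq_add_neg]

lemma sum_choose_tail_le_exp_neg_sq (m : ℕ) {q : ℝ} (hq : 0 ≤ q) :
    ∑ K ∈ Finset.range (m + 1) with q * √(m / 2) < |((K : ℕ) : ℝ) - m / 2|,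
      (m.choose K : ℝ) / 2 ^ m ≤ 2 * Real.exp (-q ^ 2) := by
  rcases m.eq_zero_or_pos with rfl | hm
  · simpa [Finset.sum_filter] using (Real.exp_pos _).le
  set r := √((m : ℝ) / 2) with hr
  have hr_pos : 0 < r := Real.sqrt_pos.2 (by positivity)
  have hr_sq : (m : ℝ) = 2 * r ^ 2 := by rw [hr, Real.sq_sqrt (by positivity)]; ring
  -- `l = 2 q / r` minimises the exponent `m l² / 8 - l q r`.
  refine (sum_choose_tail_le_exp m (l := 2 * q / r) (by positivity) (q * r)).trans_eq ?_
  congr 2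
  rw [hr_sq]
  field_simp
  ring

end BinomialTail

section Markov

variable {Ω : Type*} [Fintype Ω]

namespace IsProbVec

variable {μ f : Ω → ℝ}

lemma dotProduct_one (hμ : IsProbVec μ) : μ ⬝ᵥ 1 = 1 := by
  rw [_root_.dotProduct_one, hμ.2]

lemma dotProduct_mem_Icc (hμ : IsProbVec μ) (hf : f ∈ Set.Icc 0 1) :
    μ ⬝ᵥ f ∈ Set.Icc (0 : ℝ) 1 :=
  ⟨dotProduct_nonneg_of_nonneg hμ.1 hf.1,
    (dotProduct_le_dotProduct_of_nonneg_left hf.2 hμ.1).trans_eq hμ.dotProduct_one⟩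

lemma sq_dotProduct_le (hμ : IsProbVec μ) (f : Ω → ℝ) : (μ ⬝ᵥ f) ^ 2 ≤ μ ⬝ᵥ f ^ 2 :=
  Real.pow_arith_mean_le_arith_mean_pow_of_even _ μ f (fun x _ => hμ.1 x) hμ.2 even_two

end IsProbVec

section TotalVariation

variable {α β : Ω → ℝ}

lemma dotProduct_sub_dotProduct_eq_sum_mul_sub_half (h : ∑ x, α x = ∑ x, β x) (f : Ω → ℝ) :
    α ⬝ᵥ f - β ⬝ᵥ f = ∑ x, (α x - β x) * (f x - 1 / 2) := by
  simp only [dotProduct, sub_mul, mul_sub, Finset.sum_sub_distrib, ← Finset.sum_mul, h]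
  ring

lemma dotProduct_sub_dotProduct_le_tvDist (h : ∑ x, α x = ∑ x, β x) {f : Ω → ℝ}
    (hf : f ∈ Set.Icc 0 1) : α ⬝ᵥ f - β ⬝ᵥ f ≤ tvDist α β := by
  rw [dotProduct_sub_dotProduct_eq_sum_mul_sub_half h, tvDist, Finset.sum_div]
  refine Finset.sum_le_sum fun x _ => ?_
  have hfx0 : 0 ≤ f x := hf.1 x
  have hfx1 : f x ≤ 1 := hf.2 x
  have hfx : |f x - 1 / 2| ≤ 1 / 2 := abs_le.2 ⟨by linarith, by linarith⟩
  calc (α x - β x) * (f x - 1 / 2) ≤ |α x - β x| * |f x - 1 / 2| :=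
        (le_abs_self _).trans_eq (abs_mul _ _)
    _ ≤ |α x - β x| * (1 / 2) := by gcongr
    _ = |α x - β x| / 2 := by ring

lemma exists_tvDist_eq_dotProduct_sub_dotProduct (h : ∑ x, α x = ∑ x, β x) :
    ∃ f ∈ Set.Icc (0 : Ω → ℝ) 1, tvDist α β = α ⬝ᵥ f - β ⬝ᵥ f := by
  refine ⟨fun x => if β x ≤ α x then 1 else 0, ⟨fun x => ?_, fun x => ?_⟩, ?_⟩
  · dsimp only; split_ifs <;> norm_num
  · dsimp only; split_ifs <;> norm_num
  rw [dotProduct_sub_dotProduct_eq_sum_mul_sub_half h, tvDist, Finset.sum_div]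
  refine Finset.sum_congr rfl fun x _ => ?_
  split_ifs with hx
  · rw [abs_of_nonneg (sub_nonneg.2 hx)]
    ring
  · rw [abs_of_neg (sub_neg.2 (not_le.1 hx))]
    ring

end TotalVariation

lemma exists_majorant_on_window {pi : Ω → ℝ} (hpi : 0 ≤ pi) {F : ℕ → Ω → ℝ}
    (hF : ∀ k, F k ∈ Set.Icc 0 1) (k₀ k₁ : ℕ) :
    ∃ g ∈ Set.Icc (0 : Ω → ℝ) 1, (∀ k, k₀ ≤ k → k ≤ k₁ → F k ≤ g) ∧
      pi ⬝ᵥ g ≤ pi ⬝ᵥ F k₀ + ∑ j ∈ Finset.Ico k₀ k₁, pi ⬝ᵥ |F (j + 1) - F j| := by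
  set D := ∑ j ∈ Finset.Ico k₀ k₁, |F (j + 1) - F j| with hD
  have hD_nonneg : 0 ≤ D := Finset.sum_nonneg fun _ _ => abs_nonneg _
  refine ⟨1 ⊓ (F k₀ + D), ⟨le_inf zero_le_one (add_nonneg (hF k₀).1 hD_nonneg), inf_le_left⟩,
    fun k hk₀ hk₁ => le_inf (hF k).2 (le_add_sum_abs_sub F hk₀ hk₁), ?_⟩
  calc pi ⬝ᵥ (1 ⊓ (F k₀ + D)) ≤ pi ⬝ᵥ (F k₀ + D) :=
        dotProduct_le_dotProduct_of_nonneg_left inf_le_right hpi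
    _ = pi ⬝ᵥ F k₀ + ∑ j ∈ Finset.Ico k₀ k₁, pi ⬝ᵥ |F (j + 1) - F j| := by
        rw [dotProduct_add, hD, dotProduct_sum]

namespace IsStochastic

variable {P Q : Matrix Ω Ω ℝ}

lemma isProbVec_row (hP : IsStochastic P) (x : Ω) : IsProbVec (P x) :=
  ⟨hP.1 x, hP.2 x⟩

lemma mulVec_mem_Icc (hP : IsStochastic P) {f : Ω → ℝ} (hf : f ∈ Set.Icc 0 1) :
    P *ᵥ f ∈ Set.Icc 0 1 :=
  ⟨fun x => ((hP.isProbVec_row x).dotProduct_mem_Icc hf).1,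
    fun x => ((hP.isProbVec_row x).dotProduct_mem_Icc hf).2⟩

lemma mulVec_mono (hP : IsStochastic P) : Monotone (P *ᵥ ·) :=
  fun _ _ hfg x => dotProduct_le_dotProduct_of_nonneg_left hfg (hP.isProbVec_row x).1

lemma dotProduct_mulVec_sq_le (hP : IsStochastic P) {pi : Ω → ℝ} (hpi : 0 ≤ pi)
    (hstat : pi ᵥ* P = pi) (f : Ω → ℝ) : pi ⬝ᵥ (P *ᵥ f) ^ 2 ≤ pi ⬝ᵥ f ^ 2 :=
  calc pi ⬝ᵥ (P *ᵥ f) ^ 2 ≤ pi ⬝ᵥ (P *ᵥ f ^ 2) :=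
        dotProduct_le_dotProduct_of_nonneg_left
          (fun x => (hP.isProbVec_row x).sq_dotProduct_le f) hpi
    _ = pi ⬝ᵥ f ^ 2 := by rw [dotProduct_mulVec, hstat]

lemma iff_mem_rowStochastic [DecidableEq Ω] : IsStochastic P ↔ P ∈ rowStochastic ℝ Ω :=
  mem_rowStochastic_iff_sum.symm

lemma mul (hP : IsStochastic P) (hQ : IsStochastic Q) : IsStochastic (P * Q) := by
  classical
  exact iff_mem_rowStochastic.2 (mul_mem (iff_mem_rowStochastic.1 hP) (iff_mem_rowStochastic.1 hQ))

lemma pow [DecidableEq Ω] (hP : IsStochastic P) (k : ℕ) : IsStochastic (P ^ k) :=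
  iff_mem_rowStochastic.2 (pow_mem (iff_mem_rowStochastic.1 hP) k)

lemma sum_smul {ι : Type*} {s : Finset ι} {w : ι → ℝ} {A : ι → Matrix Ω Ω ℝ}
    (hw0 : ∀ i ∈ s, 0 ≤ w i) (hw1 : ∑ i ∈ s, w i = 1) (hA : ∀ i ∈ s, IsStochastic (A i)) :
    IsStochastic (∑ i ∈ s, w i • A i) := by
  classical
  exact iff_mem_rowStochastic.2 <| convex_rowStochastic.sum_mem hw0 hw1 fun i hi =>
    iff_mem_rowStochastic.1 (hA i hi)

lemma lazyM [DecidableEq Ω] (hP : IsStochastic P) : IsStochastic (lazyM P) := by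
  rw [_root_.lazyM, smul_add, iff_mem_rowStochastic]
  exact convex_rowStochastic (one_mem _) (iff_mem_rowStochastic.1 hP) (by norm_num) (by norm_num)
    (by norm_num)

lemma sum_vecMul (hP : IsStochastic P) (μ : Ω → ℝ) : ∑ x, (μ ᵥ* P) x = ∑ x, μ x := by
  classical
  rw [← dotProduct_one, ← dotProduct_mulVec, (iff_mem_rowStochastic.1 hP).2, dotProduct_one]

end IsStochastic

section AveragedChain

variable [DecidableEq Ω] {P : Matrix Ω Ω ℝ} {pi : Ω → ℝ}

/-- The `k`-step transition matrix `(Pᵏ + Pᵏ⁺¹)/2` of the averaged chain, factored through the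
lazy chain so that it is visibly stochastic. -/
noncomputable def aveM (P : Matrix Ω Ω ℝ) (k : ℕ) : Matrix Ω Ω ℝ :=
  P ^ k * lazyM P

lemma aveM_eq (P : Matrix Ω Ω ℝ) (k : ℕ) : aveM P k = (2 : ℝ)⁻¹ • (P ^ k + P ^ (k + 1)) := by
  rw [aveM, lazyM, mul_smul_comm, mul_add, mul_one, pow_succ]

lemma aveM_succ_sub_aveM (P : Matrix Ω Ω ℝ) (k : ℕ) :
    aveM P (k + 1) - aveM P k = (2 : ℝ)⁻¹ • (P ^ (k + 2) - P ^ k) := by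
  rw [aveM_eq, aveM_eq, ← smul_sub]
  congr 1
  abel

lemma pow_mul_aveM (P : Matrix Ω Ω ℝ) (j k : ℕ) : P ^ j * aveM P k = aveM P (j + k) := by
  rw [aveM, aveM, ← mul_assoc, pow_add]

lemma IsStochastic.aveM (hP : IsStochastic P) (k : ℕ) : IsStochastic (aveM P k) :=
  (hP.pow k).mul hP.lazyM

lemma aveDist_eq_tvDist_vecMul_aveM (P : Matrix Ω Ω ℝ) (pi : Ω → ℝ) (t : ℝ) (μ : Ω → ℝ) :
    aveDist P pi t μ = tvDist (μ ᵥ* aveM P ⌊t⌋₊) pi := by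
  rw [aveDist, aveM_eq, vecMul_smul, vecMul_add]
  congr 1
  ext y
  simp only [Pi.smul_apply, Pi.add_apply, smul_eq_mul]
  ring

lemma pow_succ_mulVec (P : Matrix Ω Ω ℝ) (k : ℕ) (f : Ω → ℝ) :
    P ^ (k + 1) *ᵥ f = P *ᵥ (P ^ k *ᵥ f) := by
  rw [pow_succ', mulVec_mulVec]

lemma vecMul_pow_eq_self (hstat : pi ᵥ* P = pi) (k : ℕ) : pi ᵥ* P ^ k = pi := by
  induction k with
  | zero => rw [pow_zero, vecMul_one]
  | succ k ih => rw [pow_succ, ← vecMul_vecMul, ih, hstat]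

lemma vecMul_aveM_eq_self (hstat : pi ᵥ* P = pi) (k : ℕ) : pi ᵥ* aveM P k = pi := by
  rw [aveM_eq, vecMul_smul, vecMul_add, vecMul_pow_eq_self hstat, vecMul_pow_eq_self hstat,
    ← two_smul ℝ pi, smul_smul, inv_mul_cancel₀ two_ne_zero, one_smul]

lemma lazyM_pow_eq_sum (P : Matrix Ω Ω ℝ) (m : ℕ) :
    lazyM P ^ m = ∑ K ∈ Finset.range (m + 1), ((m.choose K : ℝ) / 2 ^ m) • P ^ K := by
  rw [lazyM, smul_pow, add_comm 1 P, (Commute.one_right P).add_pow, Finset.smul_sum]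
  refine Finset.sum_congr rfl fun K _ => ?_
  rw [one_pow, mul_one, ← nsmul_eq_mul', ← Nat.cast_smul_eq_nsmul ℝ, smul_smul, inv_pow,
    inv_mul_eq_div]

end AveragedChain

namespace IsReversible

variable {P : Matrix Ω Ω ℝ} {pi : Ω → ℝ}

lemma dotProduct_mulVec_mul (hrev : IsReversible P pi) (f g : Ω → ℝ) :
    pi ⬝ᵥ ((P *ᵥ f) * g) = pi ⬝ᵥ (f * (P *ᵥ g)) := by
  simp only [mulVec, dotProduct, Pi.mul_apply, Finset.mul_sum, Finset.sum_mul]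
  rw [Finset.sum_comm]
  refine Finset.sum_congr rfl fun y _ => Finset.sum_congr rfl fun x _ => ?_
  linear_combination f y * g x * hrev x y

lemma vecMul_eq_self (hrev : IsReversible P pi) (hP : IsStochastic P) : pi ᵥ* P = pi := by
  ext y
  simp only [vecMul, dotProduct]
  rw [Finset.sum_congr rfl fun x _ => hrev x y, ← Finset.mul_sum, hP.2, mul_one]

variable [DecidableEq Ω]

lemma secondDiff_dotProduct_pow_mulVec_sq (hrev : IsReversible P pi) (f : Ω → ℝ) (k : ℕ) :
    pi ⬝ᵥ (P ^ k *ᵥ f) ^ 2 - 2 * pi ⬝ᵥ (P ^ (k + 1) *ᵥ f) ^ 2 + pi ⬝ᵥ (P ^ (k + 2) *ᵥ f) ^ 2 =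
      pi ⬝ᵥ (P ^ (k + 2) *ᵥ f - P ^ k *ᵥ f) ^ 2 := by
  have hcross : pi ⬝ᵥ (P ^ (k + 1) *ᵥ f) ^ 2 = pi ⬝ᵥ ((P ^ k *ᵥ f) * (P ^ (k + 2) *ᵥ f)) := by
    have h := hrev.dotProduct_mulVec_mul (P ^ k *ᵥ f) (P ^ (k + 1) *ᵥ f)
    rwa [← pow_succ_mulVec, ← pow_succ_mulVec, ← sq] at h
  have hexpand : (P ^ (k + 2) *ᵥ f - P ^ k *ᵥ f) ^ 2 = (P ^ k *ᵥ f) ^ 2 -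
      (2 : ℝ) • ((P ^ k *ᵥ f) * (P ^ (k + 2) *ᵥ f)) + (P ^ (k + 2) *ᵥ f) ^ 2 := by
    rw [two_smul]
    ring
  rw [hcross, hexpand, dotProduct_add, dotProduct_sub, dotProduct_smul, smul_eq_mul]

lemma dotProduct_pow_mulVec_sub_sq_mul_le (hrev : IsReversible P pi) (hP : IsStochastic P)
    (hpi : 0 ≤ pi) (f : Ω → ℝ) (k : ℕ) :
    pi ⬝ᵥ (P ^ (k + 2) *ᵥ f - P ^ k *ᵥ f) ^ 2 * ((k + 1) * (k + 2) / 2) ≤ pi ⬝ᵥ f ^ 2 := by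
  have hstat := hrev.vecMul_eq_self hP
  have hnonneg (k : ℕ) : 0 ≤ pi ⬝ᵥ (P ^ k *ᵥ f) ^ 2 :=
    dotProduct_nonneg_of_nonneg hpi fun _ => sq_nonneg _
  have hanti : Antitone fun k => pi ⬝ᵥ (P ^ k *ᵥ f) ^ 2 := antitone_nat_of_succ_le fun k => by
    rw [pow_succ_mulVec]
    exact hP.dotProduct_mulVec_sq_le hpi hstat _
  have hdiff : Antitone fun k => pi ⬝ᵥ (P ^ (k + 2) *ᵥ f - P ^ k *ᵥ f) ^ 2 :=
    antitone_nat_of_succ_le fun k => by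
      rw [add_right_comm, pow_succ_mulVec P (k + 2), pow_succ_mulVec P k, ← mulVec_sub]
      exact hP.dotProduct_mulVec_sq_le hpi hstat _
  simp only [← hrev.secondDiff_dotProduct_pow_mulVec_sq] at hdiff ⊢
  simpa using secondDiff_mul_le hnonneg hanti hdiff k

lemma dotProduct_abs_aveM_succ_sub_aveM_le (hrev : IsReversible P pi) (hP : IsStochastic P)
    (hpi : IsProbVec pi) {f : Ω → ℝ} (hf : f ∈ Set.Icc 0 1) (k : ℕ) :
    pi ⬝ᵥ |aveM P (k + 1) *ᵥ f - aveM P k *ᵥ f| ≤ 1 / (k + 1) := by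
  set d := P ^ (k + 2) *ᵥ f - P ^ k *ᵥ f
  have hL1 : pi ⬝ᵥ |aveM P (k + 1) *ᵥ f - aveM P k *ᵥ f| = (pi ⬝ᵥ |d|) / 2 := by
    have habs : |(2 : ℝ)⁻¹ • d| = (2 : ℝ)⁻¹ • |d| := funext fun x => by simp [abs_mul]
    rw [← sub_mulVec, aveM_succ_sub_aveM, smul_mulVec, sub_mulVec, habs, dotProduct_smul,
      smul_eq_mul, inv_mul_eq_div]
  have hf_sq : pi ⬝ᵥ f ^ 2 ≤ 1 :=
    (hpi.dotProduct_mem_Icc ⟨fun _ => sq_nonneg _, fun x => pow_le_one₀ (hf.1 x) (hf.2 x)⟩).2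
  have hL2 : pi ⬝ᵥ d ^ 2 * ((k + 1) * (k + 2) / 2) ≤ 1 :=
    (hrev.dotProduct_pow_mulVec_sub_sq_mul_le hP hpi.1 f k).trans hf_sq
  have hjensen : (pi ⬝ᵥ |d|) ^ 2 ≤ pi ⬝ᵥ d ^ 2 := by
    have habs : |d| ^ 2 = d ^ 2 := funext fun x => sq_abs (d x)
    exact habs ▸ hpi.sq_dotProduct_le |d|
  rw [hL1, le_div_iff₀ (by positivity)]
  refine le_of_sq_le_sq ?_ zero_le_one
  nlinarith [mul_le_mul_of_nonneg_right hjensen (by positivity : (0 : ℝ) ≤ (k + 1) ^ 2 / 4),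
    mul_nonneg ((sq_nonneg _).trans hjensen) (by positivity : (0 : ℝ) ≤ k + 1)]

lemma exists_aveM_mulVec_majorant (hrev : IsReversible P pi) (hP : IsStochastic P)
    (hpi : IsProbVec pi) {f : Ω → ℝ} (hf : f ∈ Set.Icc 0 1) (k₀ k₁ : ℕ) :
    ∃ g ∈ Set.Icc (0 : Ω → ℝ) 1, (∀ k, k₀ ≤ k → k ≤ k₁ → aveM P k *ᵥ f ≤ g) ∧
      pi ⬝ᵥ g ≤ pi ⬝ᵥ f + (k₁ - k₀ : ℕ) / (k₀ + 1) := by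
  obtain ⟨g, hg, hmaj, hpig⟩ := exists_majorant_on_window hpi.1 (F := fun k => aveM P k *ᵥ f)
    (fun k => (hP.aveM k).mulVec_mem_Icc hf) k₀ k₁
  refine ⟨g, hg, hmaj, hpig.trans (add_le_add (le_of_eq ?_) ?_)⟩
  · rw [dotProduct_mulVec, vecMul_aveM_eq_self (hrev.vecMul_eq_self hP)]
  · rw [← Nat.card_Ico, div_eq_mul_one_div, ← nsmul_eq_mul]
    refine Finset.sum_le_card_nsmul _ _ _ fun j hj => ?_
    have hj₀ : k₀ ≤ j := (Finset.mem_Ico.1 hj).1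
    calc _ ≤ 1 / ((j : ℝ) + 1) := hrev.dotProduct_abs_aveM_succ_sub_aveM_le hP hpi hf j
      _ ≤ 1 / ((k₀ : ℝ) + 1) := by gcongr

lemma tvDist_aveM_le_tvDist_mixture (hrev : IsReversible P pi) (hP : IsStochastic P)
    (hpi : IsProbVec pi) {μ : Ω → ℝ} (hμ : IsProbVec μ) {s : Finset ℕ} {w : ℕ → ℝ}
    (hw0 : ∀ K ∈ s, 0 ≤ w K) (hw1 : ∑ K ∈ s, w K = 1) (n k₀ k₁ : ℕ) :
    tvDist (μ ᵥ* aveM P n) pi ≤ tvDist (μ ᵥ* ∑ K ∈ s, w K • P ^ K) pi +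
      (k₁ - k₀ : ℕ) / (k₀ + 1) + ∑ K ∈ s with ¬ (k₀ + K ≤ n ∧ n ≤ k₁ + K), w K := by
  have hmass {Q : Matrix Ω Ω ℝ} (hQ : IsStochastic Q) : ∑ x, (μ ᵥ* Q) x = ∑ x, pi x := by
    rw [hQ.sum_vecMul, hμ.2, hpi.2]
  obtain ⟨f, hf, htv⟩ := exists_tvDist_eq_dotProduct_sub_dotProduct (hmass (hP.aveM n))
  obtain ⟨g, hg, hmaj, hpig⟩ := hrev.exists_aveM_mulVec_majorant hP hpi hf k₀ k₁
  have hmixture : (μ ᵥ* ∑ K ∈ s, w K • P ^ K) ⬝ᵥ g = ∑ K ∈ s, w K * μ ⬝ᵥ (P ^ K *ᵥ g) := by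
    simp only [← dotProduct_mulVec, sum_mulVec, dotProduct_sum, smul_mulVec, dotProduct_smul,
      smul_eq_mul]
  have hwindow (K : ℕ) (hK : k₀ + K ≤ n ∧ n ≤ k₁ + K) :
      (μ ᵥ* aveM P n) ⬝ᵥ f ≤ μ ⬝ᵥ (P ^ K *ᵥ g) := by
    rw [← dotProduct_mulVec, ← Nat.add_sub_cancel' (Nat.le_of_add_left_le hK.1), ← pow_mul_aveM,
      ← mulVec_mulVec]
    exact dotProduct_le_dotProduct_of_nonneg_left
      ((hP.pow K).mulVec_mono (hmaj _ (by lia) (by lia))) hμ.1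
  have hcompare : (μ ᵥ* aveM P n) ⬝ᵥ f ≤ (μ ᵥ* ∑ K ∈ s, w K • P ^ K) ⬝ᵥ g +
      ∑ K ∈ s with ¬ (k₀ + K ≤ n ∧ n ≤ k₁ + K), w K := by
    rw [hmixture]
    refine le_sum_mul_add_sum_filter_not _ hw0 hw1 ?_
      (fun K _ => (hμ.dotProduct_mem_Icc ((hP.pow K).mulVec_mem_Icc hg)).1) fun K _ => hwindow K
    rw [← dotProduct_mulVec]
    exact (hμ.dotProduct_mem_Icc ((hP.aveM n).mulVec_mem_Icc hf)).2
  have hlower := dotProduct_sub_dotProduct_le_tvDist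
    (hmass (IsStochastic.sum_smul hw0 hw1 fun K _ => hP.pow K)) hg
  linarith

lemma tvDist_aveM_le_tvDist_lazyM_pow (hrev : IsReversible P pi) (hP : IsStochastic P)
    (hpi : IsProbVec pi) {μ : Ω → ℝ} (hμ : IsProbVec μ) (n m : ℕ) {q : ℝ} (hq : 0 ≤ q)
    (hpos : 0 < n - m / 2 - q * √(m / 2)) :
    tvDist (μ ᵥ* aveM P n) pi ≤ tvDist (μ ᵥ* lazyM P ^ m) pi +
      2 * (q * √(m / 2)) / (n - m / 2 - q * √(m / 2)) + 2 * Real.exp (-q ^ 2) := by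
  set b := q * √((m : ℝ) / 2)
  set a := (n : ℝ) - m / 2
  have hb_nonneg : 0 ≤ b := by positivity
  set k₀ := ⌈a - b⌉₊
  set k₁ := ⌊a + b⌋₊
  have hk₀ : a - b ≤ k₀ := Nat.le_ceil _
  have hk₁ : (k₁ : ℝ) ≤ a + b := Nat.floor_le (by linarith)
  have hwidth : ((k₁ - k₀ : ℕ) : ℝ) / (k₀ + 1) ≤ 2 * b / (a - b) := by
    gcongr
    · rcases le_total k₀ k₁ with hle | hle
      · rw [Nat.cast_sub hle]
        linarith
      · rw [Nat.sub_eq_zero_of_le hle, Nat.cast_zero]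
        positivity
    · linarith
  have hwindow (K : ℕ) (hK : |(K : ℝ) - m / 2| ≤ b) : k₀ + K ≤ n ∧ n ≤ k₁ + K :=
    ceil_add_le_and_le_floor_add hpos.le hK
  have htail : ∑ K ∈ Finset.range (m + 1) with ¬ (k₀ + K ≤ n ∧ n ≤ k₁ + K),
      (m.choose K : ℝ) / 2 ^ m ≤ 2 * Real.exp (-q ^ 2) := by
    refine (Finset.sum_le_sum_of_subset_of_nonneg ?_ fun _ _ _ => by positivity).trans
      (sum_choose_tail_le_exp_neg_sq m hq)
    exact Finset.monotone_filter_right _ fun K _ hK => not_le.1 (mt (hwindow K) hK)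
  have hcompare := hrev.tvDist_aveM_le_tvDist_mixture hP hpi hμ (fun _ _ => by positivity)
    (sum_choose_div_two_pow m) n k₀ k₁
  rw [← lazyM_pow_eq_sum] at hcompare
  linarith

end IsReversible

end Markov

section Parameters

lemma mul_sqrt_le_floor_sub_floor {t s : ℝ} (ht : 0 < t) (hs : 2 ≤ s) :
    5 / 8 * (s * √t) ≤ ⌊t + (⌈s * √t⌉ : ℤ)⌋₊ - (⌊2 * t⌋₊ : ℝ) / 2 := by
  have hfloor : ⌊t + (⌈s * √t⌉ : ℤ)⌋₊ = ⌊t⌋₊ + ⌈s * √t⌉₊ := by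
    rw [← natCast_ceil_eq_intCast_ceil (by positivity), Nat.floor_add_natCast ht.le]
  have hceil : s * √t ≤ ⌈s * √t⌉₊ := Nat.le_ceil _
  rw [hfloor]
  push_cast
  rcases lt_or_ge t (1 / 2) with hsmall | hlarge
  · rw [Nat.floor_eq_zero.2 (by linarith : 2 * t < 1), Nat.cast_zero]
    linarith [Nat.cast_nonneg (α := ℝ) ⌊t⌋₊, (by positivity : 0 ≤ s * √t)]
  · have hodd : (⌊2 * t⌋₊ : ℝ) ≤ 2 * ⌊t⌋₊ + 1 := by
      have : ⌊2 * t⌋₊ < 2 * ⌊t⌋₊ + 2 := by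
        rw [Nat.floor_lt (by linarith)]
        push_cast
        linarith [Nat.lt_floor_add_one t]
      exact_mod_cast Nat.le_of_lt_succ this
    have hsqrt : 2 / 3 ≤ √t := Real.le_sqrt_of_sq_le (by linarith)
    linarith [mul_le_mul hs hsqrt (by norm_num) (by linarith)]

lemma sqrt_log_le_half {s : ℝ} (hs : 0 < s) : √(Real.log s) ≤ s / 2 := by
  rw [Real.sqrt_le_left (by positivity)]
  linarith [Real.log_le_sub_one_of_pos hs, sq_nonneg (s / 2 - 1)]

lemma half_le_sqrt_log {s : ℝ} (hs : 2 ≤ s) : 1 / 2 ≤ √(Real.log s) := by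
  refine Real.le_sqrt_of_sq_le ?_
  linarith [Real.log_le_log two_pos hs, Real.log_two_gt_d9]

end Parameters

theorem ave_dist_le_lazy_dist_explicit_general {Ω : Type*} [Fintype Ω] [DecidableEq Ω]
    {P : Matrix Ω Ω ℝ} {pi : Ω → ℝ} (hP : IsStochastic P) (hpi : IsProbVec pi)
    (hrev : IsReversible P pi) {μ : Ω → ℝ} (hμ : IsProbVec μ) {t s : ℝ} (ht : 0 < t)
    (hs : 2 ≤ s) :
    aveDist P pi (t + ((⌈s * √t⌉ : ℤ) : ℝ)) μ ≤
      lazyDist P pi (2 * t) μ + 20 * s⁻¹ * √(Real.log s) := by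
  rw [aveDist_eq_tvDist_vecMul_aveM, lazyDist]
  set n := ⌊t + ((⌈s * √t⌉ : ℤ) : ℝ)⌋₊
  set m := ⌊2 * t⌋₊
  set q := √(Real.log s)
  have hr : 0 < √t := Real.sqrt_pos.2 ht
  have hscale : q * √(m / 2) ≤ q * √t := by
    gcongr
    linarith [Nat.floor_le (mul_pos two_pos ht).le]
  have hgap : s * √t / 8 ≤ n - m / 2 - q * √(m / 2) := by
    linarith [mul_sqrt_le_floor_sub_floor ht hs,
      mul_le_mul_of_nonneg_right (sqrt_log_le_half (two_pos.trans_le hs)) hr.le]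
  have hgap_pos : 0 < s * √t / 8 := by positivity
  have hwidth : 2 * (q * √(m / 2)) / (n - m / 2 - q * √(m / 2)) ≤ 16 * s⁻¹ * q :=
    calc _ ≤ 2 * (q * √t) / (s * √t / 8) := by gcongr
      _ = 16 * s⁻¹ * q := by field_simp; ring
  have htail : 2 * Real.exp (-q ^ 2) ≤ 4 * s⁻¹ * q := by
    rw [Real.sq_sqrt (Real.log_nonneg (by linarith)), Real.exp_neg, Real.exp_log (by linarith)]
    linarith [mul_le_mul_of_nonneg_left (half_le_sqrt_log hs) (by positivity : 0 ≤ 4 * s⁻¹)]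
  linarith [hrev.tvDist_aveM_le_tvDist_lazyM_pow hP hpi hμ n m (Real.sqrt_nonneg _)
    (hgap_pos.trans_le hgap)]

/-- **Proposition 1.6 (eq. (9)) of Hermon–Peres.**
There is an absolute constant `C` such that for every finite irreducible reversible Markov
chain, every initial distribution `μ`, every `t ≥ 2` and every `2 ≤ s ≤ e^t`,
`d_ave(t + ⌈s√t⌉, μ) ≤ d_L(2t, μ) + C s⁻¹ √(log s)`. -/
theorem ave_dist_le_lazy_dist_explicit :
    ∃ C : ℝ, 0 < C ∧
      ∀ (Ω : Type) [Fintype Ω] [DecidableEq Ω]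
        (P : Matrix Ω Ω ℝ) (pi : Ω → ℝ), IsRevMC P pi →
        ∀ μ : Ω → ℝ, IsProbVec μ →
        ∀ t s : ℝ, 2 ≤ t → 2 ≤ s → s ≤ Real.exp t →
          aveDist P pi (t + ((⌈s * Real.sqrt t⌉ : ℤ) : ℝ)) μ ≤
            lazyDist P pi (2 * t) μ + C * s⁻¹ * Real.sqrt (Real.log s) := by
  refine ⟨20, by norm_num, fun Ω _ _ P pi hchain μ hμ t s ht hs _ => ?_⟩
  obtain ⟨⟨hP, -, hpi, -⟩, hrev⟩ := hchain
  exact ave_dist_le_lazy_dist_explicit_general hP hpi hrev hμ (two_pos.trans_le ht) hs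
end

section
/- Let (Ω,P,π) be a finite irreducible Markov chain (reversibility is not assumed). Then for every natural number t, every real 0 < s ≤ √t and every probability measure μ on Ω: d_c(t + s√t, μ) ≤ d_ave(t, μ) + e^{−s²/4}. -/
open Matrix Filter Asymptotics

/-!
The law `Poisson(r)` is the law of a `Binomial(M, 1/2)` variable with `M` of law `Poisson(2r)`.
Keeping one fair coin for the end exhibits `Poisson(r)`, up to the event `M = 0`, as a mixture of
the uniform laws on the pairs `{k, k + 1}`. After such a pair is chosen with `t ≤ k`, the chain has
the law of the averaged chain at time `k`, which is at least as close to stationarity as at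
time `t`. The exceptional event (`M = 0` or `k < t`) forces the Poisson variable to be at most `t`,
and for `r = t + s√t` Chernoff's inequality bounds the probability of that by `e^{-s²/4}`.
-/

section ExpNegRemainder

/-- The unsigned Taylor remainder of `e^{-x}` at order `n`, that is
`(-1)^n (e^{-x} - ∑_{k < n} (-x)^k / k!)`. It provides the weights of the two-point laws in the
decomposition of the Poisson law; it is defined recursively because that decomposition is an
identity between sums of two consecutive remainders. -/
noncomputable def expNegRemainder : ℕ → ℝ → ℝ
  | 0, x => Real.exp (-x)
  | n + 1, x => x ^ n / n.factorial - expNegRemainder n x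

lemma expNegRemainder_add_succ (n : ℕ) (x : ℝ) :
    expNegRemainder n x + expNegRemainder (n + 1) x = x ^ n / n.factorial := by
  simp only [expNegRemainder, add_sub_cancel]

lemma hasDerivAt_pow_succ_div_factorial (n : ℕ) (x : ℝ) :
    HasDerivAt (fun y : ℝ ↦ y ^ (n + 1) / (n + 1).factorial) (x ^ n / n.factorial) x := by
  refine ((hasDerivAt_pow (n + 1) x).div_const _).congr_deriv ?_
  rw [Nat.factorial_succ, Nat.cast_mul, Nat.add_sub_cancel,
    mul_div_mul_left _ _ (Nat.cast_ne_zero.2 n.succ_ne_zero)]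

lemma hasDerivAt_expNegRemainder_succ (n : ℕ) (x : ℝ) :
    HasDerivAt (expNegRemainder (n + 1)) (expNegRemainder n x) x := by
  induction n with
  | zero =>
    simpa [funext_iff, expNegRemainder] using ((hasDerivAt_neg x).exp.const_sub 1)
  | succ n ih => exact (hasDerivAt_pow_succ_div_factorial n x).sub ih

lemma expNegRemainder_succ_zero (n : ℕ) : expNegRemainder (n + 1) 0 = 0 := by
  induction n with
  | zero => simp [expNegRemainder]
  | succ n ih => rw [expNegRemainder, ih]; simp

lemma expNegRemainder_nonneg (n : ℕ) {x : ℝ} (hx : 0 ≤ x) : 0 ≤ expNegRemainder n x := by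
  induction n generalizing x with
  | zero => exact (Real.exp_pos _).le
  | succ n ih =>
    have hmono : MonotoneOn (expNegRemainder (n + 1)) (Set.Ici 0) := by
      refine monotoneOn_of_hasDerivWithinAt_nonneg (convex_Ici 0)
        (fun y _ ↦ (hasDerivAt_expNegRemainder_succ n y).continuousAt.continuousWithinAt)
        (fun y _ ↦ (hasDerivAt_expNegRemainder_succ n y).hasDerivWithinAt) fun y hy ↦ ?_
      exact ih (interior_subset hy)
    simpa only [expNegRemainder_succ_zero] using hmono Set.self_mem_Ici hx hx

end ExpNegRemainder

section PairMixture

open MeasureTheory Set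
open scoped NNReal

/-- The measure on `ℕ` consisting of a mass `c` at `0` and of a mixture of two-point measures, the
one with unit masses at `k` and `k + 1` having weight `ν {k}` (so the *uniform law* on `{k, k + 1}`
has weight `2 ν {k}`). -/
noncomputable def pairMixture (c : ℝ≥0) (ν : Measure ℕ) : Measure ℕ :=
  c • Measure.dirac 0 + ν + ν.map Nat.succ

variable {c : ℝ≥0} {ν : Measure ℕ}

lemma isFiniteMeasure_of_pairMixture [IsFiniteMeasure (pairMixture c ν)] : IsFiniteMeasure ν :=
  isFiniteMeasure_of_le (pairMixture c ν)
    ((Measure.le_add_left le_rfl).trans (Measure.le_add_right le_rfl))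

lemma pairMixture_real_apply [IsFiniteMeasure ν] (A : Set ℕ) :
    (pairMixture c ν).real A =
      c * (Measure.dirac 0 : Measure ℕ).real A + ν.real A + ν.real (Nat.succ ⁻¹' A) := by
  rw [pairMixture, measureReal_add_apply, measureReal_add_apply, measureReal_nnreal_smul_apply,
    map_measureReal_apply .of_discrete .of_discrete]

lemma add_two_mul_real_Iio_le_pairMixture_real_Iic [IsFiniteMeasure ν] (t : ℕ) :
    c + 2 * ν.real (Iio t) ≤ (pairMixture c ν).real (Iic t) := by
  have hsub : ν.real (Iio t) ≤ ν.real (Iic t) := measureReal_mono Iio_subset_Iic_self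
  have hpre : Nat.succ ⁻¹' Iic t = Iio t := by ext; simp
  have hdirac : (Measure.dirac 0 : Measure ℕ).real (Iic t) = 1 := by simp [measureReal_def]
  rw [pairMixture_real_apply, hpre, hdirac]
  linarith

lemma two_mul_real_le_pairMixture_real_univ [IsFiniteMeasure ν] (A : Set ℕ) :
    2 * ν.real A ≤ (pairMixture c ν).real univ := by
  have hsub : ν.real A ≤ ν.real univ := measureReal_mono (subset_univ A)
  rw [pairMixture_real_apply, preimage_univ, probReal_univ]
  linarith [c.coe_nonneg]

variable {E : Type*} [NormedAddCommGroup E] [NormedSpace ℝ E] [CompleteSpace E] {v : ℕ → E}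

lemma integral_pairMixture (hv : Integrable v (pairMixture c ν)) :
    ∫ k, v k ∂pairMixture c ν = c • v 0 + ∫ k, (v k + v (k + 1)) ∂ν := by
  obtain ⟨h, hsucc⟩ := integrable_add_measure.1 hv
  obtain ⟨hzero, hν⟩ := integrable_add_measure.1 h
  have hshift : Integrable (fun k ↦ v (k + 1)) ν :=
    (integrable_map_measure .of_discrete .of_discrete).1 hsucc
  rw [pairMixture, integral_add_measure h hsucc, integral_add_measure hzero hν,
    integral_smul_nnreal_measure, integral_dirac, integral_map .of_discrete .of_discrete,
    integral_add hν hshift, add_assoc]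

theorem norm_integral_pairMixture_le [IsProbabilityMeasure (pairMixture c ν)] {C D : ℝ} {t : ℕ}
    (hC : ∀ k, ‖v k‖ ≤ C) (hD : ∀ k, t ≤ k → ‖v k + v (k + 1)‖ ≤ 2 * D) :
    ‖∫ k, v k ∂pairMixture c ν‖ ≤ D + (pairMixture c ν).real (Iic t) * C := by
  have : IsFiniteMeasure ν := isFiniteMeasure_of_pairMixture (c := c)
  have hC0 : 0 ≤ C := (norm_nonneg _).trans (hC 0)
  have hD0 : 0 ≤ D := by linarith [(norm_nonneg _).trans (hD t le_rfl)]
  have hCC : ∀ k, ‖v k + v (k + 1)‖ ≤ 2 * C := fun k ↦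
    (norm_add_le_of_le (hC k) (hC (k + 1))).trans_eq (two_mul C).symm
  have hlow : ‖∫ k in Iio t, (v k + v (k + 1)) ∂ν‖ ≤ 2 * C * ν.real (Iio t) :=
    norm_setIntegral_le_of_norm_le_const (measure_lt_top _ _) fun k _ ↦ hCC k
  have hhigh : ‖∫ k in Ici t, (v k + v (k + 1)) ∂ν‖ ≤ 2 * D * ν.real (Ici t) :=
    norm_setIntegral_le_of_norm_le_const (measure_lt_top _ _) hD
  have hmass : 2 * ν.real (Ici t) ≤ 1 :=
    (two_mul_real_le_pairMixture_real_univ (c := c) _).trans_eq probReal_univ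
  have hintegrable : Integrable (fun k ↦ v k + v (k + 1)) ν :=
    .of_bound .of_discrete _ (ae_of_all _ hCC)
  calc ‖∫ k, v k ∂pairMixture c ν‖
      = ‖c • v 0 + (∫ k in Iio t, (v k + v (k + 1)) ∂ν + ∫ k in Ici t, (v k + v (k + 1)) ∂ν)‖ := by
        rw [integral_pairMixture (.of_bound .of_discrete C (ae_of_all _ hC)), ← compl_Iio,
          integral_add_compl measurableSet_Iio hintegrable]
    _ ≤ c * C + (2 * C * ν.real (Iio t) + 2 * D * ν.real (Ici t)) := by
        refine norm_add_le_of_le ?_ (norm_add_le_of_le hlow hhigh)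
        rw [NNReal.smul_def, norm_smul, NNReal.norm_eq]
        gcongr
        exact hC 0
    _ = 2 * ν.real (Ici t) * D + (c + 2 * ν.real (Iio t)) * C := by ring
    _ ≤ D + (pairMixture c ν).real (Iic t) * C := by
        gcongr
        · exact mul_le_of_le_one_left hD0 hmass
        · exact add_two_mul_real_Iio_le_pairMixture_real_Iic t

end PairMixture

section Poisson

open MeasureTheory ProbabilityTheory Set
open scoped NNReal

theorem exists_poissonMeasure_eq_pairMixture (r : ℝ≥0) :
    ∃ (c : ℝ≥0) (ν : Measure ℕ), Po(r) = pairMixture c ν := by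
  set q : ℕ → ℝ≥0 := fun k ↦ ⟨Real.exp (-r) * expNegRemainder k r, mul_nonneg (Real.exp_pos _).le
    (expNegRemainder_nonneg k r.coe_nonneg)⟩
  have hpoisson : ∀ k, Po(r) {k} = q k + q (k + 1) := fun k ↦ by
    have hq : Real.exp (-r) * r ^ k / k.factorial = q k + q (k + 1) := by
      rw [mul_div_assoc, ← expNegRemainder_add_succ, mul_add]
      rfl
    rw [poissonMeasure_singleton, hq, ← NNReal.coe_add, ENNReal.ofReal_coe_nnreal, ENNReal.coe_add]
  refine ⟨q 0, Measure.sum fun k ↦ (q (k + 1) : ENNReal) • Measure.dirac k,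
    Measure.ext_of_singleton fun k ↦ ?_⟩
  rw [hpoisson, pairMixture, Measure.add_apply, Measure.add_apply,
    Measure.map_apply .of_discrete .of_discrete, Measure.sum_smul_dirac_singleton]
  cases k with
  | zero =>
    have hpre : Nat.succ ⁻¹' {0} = ∅ := by ext; simp
    simp [hpre]
  | succ k =>
    have hpre : Nat.succ ⁻¹' {k + 1} = {k} := by ext; simp
    rw [hpre, Measure.sum_smul_dirac_singleton, add_comm (q (k + 1) : ENNReal)]
    simp

lemma hasSum_exp_mul_poisson (r : ℝ≥0) (x : ℝ) :
    HasSum (fun k : ℕ ↦ Real.exp (-r) * r ^ k / k.factorial * Real.exp (x * k))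
      (Real.exp (r * (Real.exp x - 1))) := by
  have hexp := (NormedSpace.expSeries_div_hasSum_exp (r * Real.exp x)).mul_left (Real.exp (-r))
  rw [← Real.exp_eq_exp_ℝ, ← Real.exp_add, neg_add_eq_sub, ← mul_sub_one] at hexp
  refine hexp.congr_fun fun k ↦ ?_
  rw [mul_pow, ← Real.exp_nat_mul, mul_comm x]
  ring

lemma integrable_exp_mul_poissonMeasure (r : ℝ≥0) (x : ℝ) :
    Integrable (fun k : ℕ ↦ Real.exp (x * k)) Po(r) := by
  rw [integrable_poissonMeasure_iff]
  simpa only [Real.norm_eq_abs, Real.abs_exp] using (hasSum_exp_mul_poisson r x).summable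

lemma mgf_poissonMeasure (r : ℝ≥0) (x : ℝ) :
    mgf (fun k : ℕ ↦ (k : ℝ)) Po(r) x = Real.exp (r * (Real.exp x - 1)) := by
  simp only [mgf, integral_poissonMeasure, smul_eq_mul,
    (hasSum_exp_mul_poisson r x).tsum_eq]

lemma one_add_le_exp_sub_sq_div_four {u : ℝ} (h0 : 0 ≤ u) (h1 : u ≤ 1) :
    1 + u ≤ Real.exp (u - u ^ 2 / 4) := by
  have hcoef : (1 : ℝ) / 2 ≤ (1 - u / 4) ^ 2 := by nlinarith
  calc 1 + u = 1 + (u - u ^ 2 / 4) + u ^ 2 * (1 / 2) / 2 := by ring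
    _ ≤ 1 + (u - u ^ 2 / 4) + u ^ 2 * (1 - u / 4) ^ 2 / 2 := by gcongr
    _ = 1 + (u - u ^ 2 / 4) + (u - u ^ 2 / 4) ^ 2 / 2 := by ring
    _ ≤ Real.exp (u - u ^ 2 / 4) := Real.quadratic_le_exp_of_nonneg (by nlinarith)

theorem poissonMeasure_real_Iic_le {r : ℝ≥0} {t : ℕ} {u : ℝ} (hr : (r : ℝ) = t * (1 + u))
    (h0 : 0 ≤ u) (h1 : u ≤ 1) : Po(r).real (Iic t) ≤ Real.exp (-(t * u ^ 2 / 4)) := by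
  have hu : 0 < 1 + u := by linarith
  set x := -Real.log (1 + u) with hx
  have hexp : Real.exp x = (1 + u)⁻¹ := by rw [hx, Real.exp_neg, Real.exp_log hu]
  have hpow : Real.exp (-x * t) = (1 + u) ^ t := by
    rw [hx, neg_neg, mul_comm, Real.exp_nat_mul, Real.exp_log hu]
  have hrate : r * (Real.exp x - 1) = -(t * u) := by
    rw [hr, hexp, mul_assoc, mul_sub, mul_inv_cancel₀ hu.ne']
    ring
  calc Po(r).real (Iic t) = Po(r).real {k : ℕ | (k : ℝ) ≤ t} := by simp only [Nat.cast_le, Iic_def]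
    _ ≤ Real.exp (-x * t) * mgf (fun k : ℕ ↦ (k : ℝ)) Po(r) x :=
        measure_le_le_exp_mul_mgf _ (neg_nonpos.2 (Real.log_nonneg (by linarith)))
          (integrable_exp_mul_poissonMeasure r x)
    _ = (1 + u) ^ t * Real.exp (-(t * u)) := by rw [hpow, mgf_poissonMeasure, hrate]
    _ ≤ Real.exp (u - u ^ 2 / 4) ^ t * Real.exp (-(t * u)) := by
        gcongr
        exact one_add_le_exp_sub_sq_div_four h0 h1
    _ = Real.exp (-(t * u ^ 2 / 4)) := by
        rw [← Real.exp_nat_mul, ← Real.exp_add]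
        ring_nf

end Poisson

section TotalVariation

variable {Ω : Type*} [Fintype Ω] {P : Matrix Ω Ω ℝ} {μ ν : Ω → ℝ}

lemma tvDist_eq_norm_toLp (μ ν : Ω → ℝ) : tvDist μ ν = ‖WithLp.toLp 1 (μ - ν)‖ / 2 := by
  simp [tvDist, PiLp.norm_eq_of_L1]

lemma tvDist_le_one (hμ : IsProbVec μ) (hν : IsProbVec ν) : tvDist μ ν ≤ 1 := by
  calc tvDist μ ν ≤ (∑ x, (μ x + ν x)) / 2 := by
        unfold tvDist
        gcongr with x
        exact (abs_sub _ _).trans_eq (by rw [abs_of_nonneg (hμ.1 x), abs_of_nonneg (hν.1 x)])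
    _ = 1 := by rw [Finset.sum_add_distrib, hμ.2, hν.2]; norm_num

lemma tvDist_vecMul_le (hP : IsStochastic P) (μ ν : Ω → ℝ) :
    tvDist (μ ᵥ* P) (ν ᵥ* P) ≤ tvDist μ ν := by
  have hcoord (y : Ω) : |(μ ᵥ* P) y - (ν ᵥ* P) y| ≤ ∑ x, |μ x - ν x| * P x y := by
    rw [← Pi.sub_apply, ← sub_vecMul]
    refine (Finset.abs_sum_le_sum_abs _ _).trans_eq (Finset.sum_congr rfl fun x _ ↦ ?_)
    rw [abs_mul, abs_of_nonneg (hP.1 x y), Pi.sub_apply]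
  refine div_le_div_of_nonneg_right ?_ zero_le_two
  calc ∑ y, |(μ ᵥ* P) y - (ν ᵥ* P) y|
      ≤ ∑ y, ∑ x, |μ x - ν x| * P x y := Finset.sum_le_sum fun y _ ↦ hcoord y
    _ = ∑ x, |μ x - ν x| := by
        rw [Finset.sum_comm]
        simp only [← Finset.mul_sum, hP.2, mul_one]

end TotalVariation

section Distances

open MeasureTheory ProbabilityTheory Set
open scoped NNReal

variable {Ω : Type*} [Fintype Ω] [DecidableEq Ω] {P : Matrix Ω Ω ℝ} {pi : Ω → ℝ}

lemma tvDist_vecMul_pow_le (hP : IsStochastic P) (hpi : pi ᵥ* P = pi) (μ : Ω → ℝ) (k : ℕ) :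
    tvDist (μ ᵥ* P ^ k) pi ≤ tvDist μ pi := by
  induction k with
  | zero => rw [pow_zero, vecMul_one]
  | succ k ih =>
    have hstep := tvDist_vecMul_le hP (μ ᵥ* P ^ k) pi
    rw [vecMul_vecMul, ← pow_succ, hpi] at hstep
    exact hstep.trans ih

lemma aveDist_natCast (P : Matrix Ω Ω ℝ) (pi μ : Ω → ℝ) (k : ℕ) :
    aveDist P pi k μ = tvDist ((2 : ℝ)⁻¹ • (μ ᵥ* P ^ k + μ ᵥ* P ^ (k + 1))) pi := by
  simp only [aveDist, Nat.floor_natCast, div_eq_inv_mul]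
  rfl

lemma antitone_aveDist_natCast (hP : IsStochastic P) (hpi : pi ᵥ* P = pi) (μ : Ω → ℝ) :
    Antitone fun k : ℕ ↦ aveDist P pi k μ := by
  refine antitone_nat_of_succ_le fun k ↦ ?_
  have hstep := tvDist_vecMul_le hP ((2 : ℝ)⁻¹ • (μ ᵥ* P ^ k + μ ᵥ* P ^ (k + 1))) pi
  rw [smul_vecMul, add_vecMul, vecMul_vecMul, vecMul_vecMul, ← pow_succ, ← pow_succ, hpi] at hstep
  simpa only [aveDist_natCast] using hstep

lemma norm_toLp_vecMul_pow_sub_le (hP : IsStochastic P) (hpi : pi ᵥ* P = pi) (μ : Ω → ℝ) (k : ℕ) :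
    ‖WithLp.toLp 1 (μ ᵥ* P ^ k - pi)‖ ≤ 2 * tvDist μ pi := by
  linarith [tvDist_vecMul_pow_le hP hpi μ k, tvDist_eq_norm_toLp (μ ᵥ* P ^ k) pi]

lemma norm_toLp_add_toLp_succ (P : Matrix Ω Ω ℝ) (pi μ : Ω → ℝ) (k : ℕ) :
    ‖WithLp.toLp 1 (μ ᵥ* P ^ k - pi) + WithLp.toLp 1 (μ ᵥ* P ^ (k + 1) - pi)‖ =
      4 * aveDist P pi k μ := by
  have hsum : μ ᵥ* P ^ k - pi + (μ ᵥ* P ^ (k + 1) - pi) =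
      (2 : ℝ) • ((2 : ℝ)⁻¹ • (μ ᵥ* P ^ k + μ ᵥ* P ^ (k + 1)) - pi) := by
    module
  rw [← WithLp.toLp_add, hsum, WithLp.toLp_smul, norm_smul, aveDist_natCast, tvDist_eq_norm_toLp,
    Real.norm_two]
  ring

lemma contDist_eq_norm_integral (hP : IsStochastic P) (hpi : pi ᵥ* P = pi) (r : ℝ≥0) (μ : Ω → ℝ) :
    contDist P pi r μ = ‖∫ k, WithLp.toLp 1 (μ ᵥ* P ^ k - pi) ∂Po(r)‖ / 2 := by
  have hintegrable : Integrable (fun k ↦ WithLp.toLp 1 (μ ᵥ* P ^ k - pi)) Po(r) :=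
    .of_bound .of_discrete _ (ae_of_all _ (norm_toLp_vecMul_pow_sub_le hP hpi μ))
  have hcoord (y : Ω) : Integrable (fun k ↦ (μ ᵥ* P ^ k) y - pi y) Po(r) := hintegrable.eval_piLp y
  have hsum (y : Ω) : ∑' k : ℕ, Real.exp (-r) * r ^ k / k.factorial * (μ ᵥ* P ^ k) y - pi y =
      (∫ k, WithLp.toLp 1 (μ ᵥ* P ^ k - pi) ∂Po(r)) y := by
    have hadd : Integrable (fun k ↦ (μ ᵥ* P ^ k) y) Po(r) := by
      simpa only [sub_eq_add_neg, integrable_add_const_iff] using hcoord y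
    rw [eval_integral_piLp hintegrable.eval_piLp]
    simp only [Pi.sub_apply]
    rw [integral_sub hadd (integrable_const _), integral_const, probReal_univ, one_smul,
      integral_poissonMeasure]
    rfl
  simp only [contDist, tvDist, hsum, PiLp.norm_eq_of_L1, Real.norm_eq_abs]

theorem contDist_le_aveDist_add_poissonMeasure_Iic (hP : IsStochastic P) (hpi : pi ᵥ* P = pi)
    (r : ℝ≥0) (t : ℕ) (μ : Ω → ℝ) :
    contDist P pi r μ ≤ aveDist P pi t μ + Po(r).real (Iic t) * tvDist μ pi := by
  obtain ⟨c, ν, hmix⟩ := exists_poissonMeasure_eq_pairMixture r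
  have : IsProbabilityMeasure (pairMixture c ν) := hmix ▸ inferInstance
  have hpair (k : ℕ) (hk : t ≤ k) : ‖WithLp.toLp 1 (μ ᵥ* P ^ k - pi) +
      WithLp.toLp 1 (μ ᵥ* P ^ (k + 1) - pi)‖ ≤ 2 * (2 * aveDist P pi t μ) := by
    rw [norm_toLp_add_toLp_succ]
    linarith [antitone_aveDist_natCast hP hpi μ hk]
  have hbound := norm_integral_pairMixture_le (c := c) (ν := ν)
    (norm_toLp_vecMul_pow_sub_le hP hpi μ) hpair
  rw [contDist_eq_norm_integral hP hpi, hmix]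
  linarith

end Distances

theorem cont_dist_le_ave_dist_general {Ω : Type*} [Fintype Ω] [DecidableEq Ω]
    {P : Matrix Ω Ω ℝ} {pi μ : Ω → ℝ} (hP : IsStochastic P) (hpi : pi ᵥ* P = pi)
    {t : ℕ} {s : ℝ} (hs : 0 ≤ s) (hst : s ≤ Real.sqrt t) :
    contDist P pi (t + s * Real.sqrt t) μ ≤
      aveDist P pi t μ + Real.exp (-s ^ 2 / 4) * tvDist μ pi := by
  set u := s / √t
  have hut : u * √t = s := div_mul_cancel_of_imp fun h ↦ le_antisymm (h ▸ hst) hs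
  have hr : t + s * √t = t * (1 + u) := by
    rw [← hut, mul_assoc, Real.mul_self_sqrt t.cast_nonneg]
    ring
  have hrate : -(t * u ^ 2 / 4) = -s ^ 2 / 4 := by
    rw [← hut, mul_pow, Real.sq_sqrt t.cast_nonneg]
    ring
  have hdist : 0 ≤ tvDist μ pi := by unfold tvDist; positivity
  refine (contDist_le_aveDist_add_poissonMeasure_Iic hP hpi ⟨t + s * √t, by positivity⟩ t
    μ).trans ?_
  gcongr
  rw [← hrate]
  exact poissonMeasure_real_Iic_le hr (by positivity) (div_le_one_of_le₀ hst (Real.sqrt_nonneg _))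

/-- **Proposition 1.8 (eq. (10), first line) of Hermon–Peres.**
For every finite irreducible Markov chain (no reversibility needed), every `t ∈ ℕ`,
every `0 < s ≤ √t` and every initial distribution `μ`,
`d_c(t + s√t, μ) ≤ d_ave(t, μ) + e^{-s²/4}`. -/
theorem cont_dist_le_ave_dist :
    ∀ (Ω : Type) [Fintype Ω] [DecidableEq Ω]
      (P : Matrix Ω Ω ℝ) (pi : Ω → ℝ), IsMC P pi →
      ∀ (t : ℕ) (s : ℝ), 0 < s → s ≤ Real.sqrt t →
      ∀ μ : Ω → ℝ, IsProbVec μ →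
        contDist P pi ((t : ℝ) + s * Real.sqrt t) μ ≤
          aveDist P pi (t : ℝ) μ + Real.exp (-s ^ 2 / 4) := by
  intro Ω _ _ P pi ⟨hP, _, hpi, hstat⟩ t s hs hst μ hμ
  refine (cont_dist_le_ave_dist_general hP hstat hs.le hst).trans ?_
  gcongr
  exact mul_le_of_le_one_right (Real.exp_pos _).le (tvDist_le_one hμ hpi)
end
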